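/- Let V be a finite-dimensional complex vector space and let x ∈ End(V) admit an invariant-factor decomposition V = V_1 ⊕ … ⊕ V_m with minimal polynomials q_1, …, q_m of degrees b_1 ≥ … ≥ b_m ≥ 1, where q_{j+1} divides q_j. Fix an index i, and let p ∈ ℂ[t] be a nonzero polynomial with deg p ≤ b_i such that dim ker p(x) ≥ ∑_{j=1}^{m} min(b_i, b_j). Then p is a nonzero scalar multiple of q_i. In other words, up to scalar multiplication, q_i is the unique nonzero polynomial of degree at most b_i whose evaluation at x has kernel of dimension at least ∑_{j=1}^{m} min(b_i, b_j). -/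

import Mathlib

/-- An endomorphism `u` of a finite-dimensional complex vector space `V` is *cyclic* if
there is a vector `e` such that `e, u e, u² e, …, u^(dim V − 1) e` is a basis of `V`. -/
def IsCyclicEnd {V : Type*} [AddCommGroup V] [Module ℂ V] (u : Module.End ℂ V) : Prop :=
  ∃ e : V,
    LinearIndependent ℂ (fun k : Fin (Module.finrank ℂ V) => (u ^ (k : ℕ)) e) ∧
    Submodule.span ℂ (Set.range fun k : Fin (Module.finrank ℂ V) => (u ^ (k : ℕ)) e) = ⊤

open Polynomial in
/-- Polynomials in `x` commute with restriction to an `x`-invariant submodule. -/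
theorem coe_aeval_restrict_apply {K V : Type*} [Field K] [AddCommGroup V] [Module K V]
    (x : Module.End K V) (W : Submodule K V) (hW : ∀ v ∈ W, x v ∈ W) (p : K[X]) (w : W) :
    ((aeval (x.restrict hW) p w : W) : V) = aeval x p w := by
  have hpow (n : ℕ) : (((x.restrict hW ^ n) w : W) : V) = (x ^ n) w := by
    induction n with
    | zero => simp
    | succ n ih => simp [pow_succ', Module.End.mul_apply, ih]
  simp [aeval_endomorphism, Polynomial.sum, hpow]

open Polynomial in
/-- If `e, u e, …, u^(n - 1) e` are linearly independent, then no nonzero polynomial of degree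
less than `n` in `u` annihilates `e`. -/
theorem eq_zero_of_aeval_apply_eq_zero_of_linearIndependent {K V : Type*} [Field K]
    [AddCommGroup V] [Module K V] {u : Module.End K V} {e : V} {n : ℕ}
    (he : LinearIndependent K (fun k : Fin n => (u ^ (k : ℕ)) e))
    {f : K[X]} (hf : f ∈ degreeLT K n) (h : aeval u f e = 0) : f = 0 := by
  by_contra hf0
  have hdeg : f.natDegree < n := (natDegree_lt_iff_degree_lt hf0).mpr (mem_degreeLT.mp hf)
  have hsum : ∑ k : Fin n, f.coeff k • (u ^ (k : ℕ)) e = 0 := by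
    rw [Fin.sum_univ_eq_sum_range (fun k => f.coeff k • (u ^ k) e), ← h, aeval_endomorphism,
      Polynomial.sum_over_range' f (by simp) n hdeg]
  refine hf0 (Polynomial.ext fun k => ?_)
  by_cases hk : k < n
  · simpa using Fintype.linearIndependent_iff.mp he _ hsum ⟨k, hk⟩
  · exact coeff_eq_zero_of_natDegree_lt (hdeg.trans_le (not_lt.mp hk))

open Polynomial in
/-- The kernel of a nonzero polynomial in a cyclic endomorphism has dimension at most the
degree of the polynomial. -/
theorem IsCyclicEnd.finrank_ker_aeval_le {V : Type*} [AddCommGroup V] [Module ℂ V]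
    [FiniteDimensional ℂ V] {u : Module.End ℂ V} (hu : IsCyclicEnd u) {p : ℂ[X]} (hp : p ≠ 0) :
    Module.finrank ℂ (LinearMap.ker (aeval u p)) ≤ p.natDegree := by
  obtain ⟨e, he, -⟩ := hu
  set n := Module.finrank ℂ V
  rcases lt_or_ge n p.natDegree with hlt | hle
  · exact (Submodule.finrank_le _).trans hlt.le
  let φ : degreeLT ℂ (n - p.natDegree) →ₗ[ℂ] LinearMap.range (aeval u p) :=
    (aeval u p).rangeRestrict ∘ₗ LinearMap.applyₗ e ∘ₗ (aeval u).toLinearMap ∘ₗ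
      (degreeLT ℂ (n - p.natDegree)).subtype
  have hφ : Function.Injective φ := by
    rw [← LinearMap.ker_eq_bot, LinearMap.ker_eq_bot']
    rintro ⟨f, hf⟩ hf0
    have hpf : aeval u (p * f) e = 0 := by
      simpa [φ, Module.End.mul_apply] using congrArg Subtype.val hf0
    have hmem : p * f ∈ degreeLT ℂ n := by
      rcases eq_or_ne f 0 with rfl | hf0
      · simp
      rw [mem_degreeLT, degree_eq_natDegree hf0] at hf
      rw [mem_degreeLT, degree_eq_natDegree (mul_ne_zero hp hf0), natDegree_mul hp hf0]
      norm_cast at hf ⊢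
      lia
    have := eq_zero_of_aeval_apply_eq_zero_of_linearIndependent he hmem hpf
    exact Subtype.ext ((mul_eq_zero.mp this).resolve_left hp)
  have hrange := LinearMap.finrank_le_finrank_of_injective hφ
  rw [(degreeLTEquiv ℂ _).finrank_eq, Module.finrank_fin_fun] at hrange
  have := LinearMap.finrank_range_add_finrank_ker (aeval u p)
  lia

open Polynomial in
/-- For a decomposition into invariant subspaces, the dimension of `ker p(x)` is at most the
sum of the dimensions of the kernels on the summands. -/
theorem finrank_ker_aeval_le_sum_restrict {K V ι : Type*} [Field K] [AddCommGroup V] [Module K V]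
    [FiniteDimensional K V] [Fintype ι] [DecidableEq ι] (x : Module.End K V)
    (E : ι → Submodule K V) (hE : DirectSum.IsInternal E)
    (hinv : ∀ j, ∀ v ∈ E j, x v ∈ E j) (p : K[X]) :
    Module.finrank K (LinearMap.ker (aeval x p)) ≤
      ∑ j, Module.finrank K (LinearMap.ker (aeval (x.restrict (hinv j)) p)) := by
  let c := LinearEquiv.ofBijective (DirectSum.coeLinearMap E) hE
  have hcomm : DirectSum.coeLinearMap E ∘ₗ
      DirectSum.lmap (fun j => aeval (x.restrict (hinv j)) p) =
        aeval x p ∘ₗ DirectSum.coeLinearMap E := by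
    ext j w
    simp [DirectSum.lof_eq_of, coe_aeval_restrict_apply]
  have hmem (j : ι) (v : LinearMap.ker (aeval x p)) :
      c.symm v j ∈ LinearMap.ker (aeval (x.restrict (hinv j)) p) := by
    have h : DirectSum.lmap (fun j => aeval (x.restrict (hinv j)) p) (c.symm v) = 0 := by
      apply hE.injective
      have hv : DirectSum.coeLinearMap E (c.symm v) = v := c.apply_symm_apply v
      have := LinearMap.congr_fun hcomm (c.symm v)
      rw [LinearMap.comp_apply, LinearMap.comp_apply, hv, LinearMap.mem_ker.mp v.2] at this
      rw [map_zero]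
      exact this
    exact DFunLike.congr_fun h j
  let φ : LinearMap.ker (aeval x p) →ₗ[K]
      ∀ j, LinearMap.ker (aeval (x.restrict (hinv j)) p) :=
    LinearMap.pi fun j => LinearMap.codRestrict _
      (DirectSum.component K ι (fun j => E j) j ∘ₗ c.symm.toLinearMap ∘ₗ Submodule.subtype _)
      (hmem j)
  have hφ : Function.Injective φ := by
    intro v w h
    apply Subtype.ext
    apply c.symm.injective
    refine DFinsupp.ext fun j => ?_
    exact congrArg Subtype.val (congrFun h j)
  exact (LinearMap.finrank_le_finrank_of_injective hφ).trans_eq (Module.finrank_pi_fintype K)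

/-- Let `x ∈ End(V)` admit an invariant-factor decomposition `V = V₁ ⊕ … ⊕ Vₘ` with
minimal polynomials `q₁, …, qₘ` of degrees `b₁ ≥ … ≥ bₘ ≥ 1`, where `qⱼ₊₁ ∣ qⱼ`.
If `p` is a nonzero polynomial with `deg p ≤ bᵢ` and `dim ker p(x) ≥ ∑ⱼ min(bᵢ, bⱼ)`,
then `p` is a nonzero scalar multiple of `qᵢ`. -/
theorem eq_invariant_factor_up_to_scalar
    (V : Type*) [AddCommGroup V] [Module ℂ V] [FiniteDimensional ℂ V]
    (x : Module.End ℂ V)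
    (m : ℕ) (E : Fin m → Submodule ℂ V) (hE : DirectSum.IsInternal E)
    (hne : ∀ j, E j ≠ ⊥)
    (hinv : ∀ j, ∀ v ∈ E j, x v ∈ E j)
    (hcyc : ∀ j, IsCyclicEnd (x.restrict (hinv j)))
    (q : Fin m → Polynomial ℂ) (hq : ∀ j, q j = minpoly ℂ (x.restrict (hinv j)))
    (b : Fin m → ℕ) (hbE : ∀ j, Module.finrank ℂ (E j) = b j)
    (hdeg : ∀ j, (q j).natDegree = b j)
    (hmono : ∀ j k : Fin m, j ≤ k → b k ≤ b j) (hpos : ∀ j, 1 ≤ b j)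
    (hdvd : ∀ (j : ℕ) (h : j + 1 < m), q ⟨j + 1, h⟩ ∣ q ⟨j, Nat.lt_of_succ_lt h⟩)
    (i : Fin m) (p : Polynomial ℂ) (hp : p ≠ 0) (hpdeg : p.natDegree ≤ b i)
    (hker : ∑ j : Fin m, min (b i) (b j) ≤
      Module.finrank ℂ (LinearMap.ker (Polynomial.aeval x p))) :
    ∃ c : ℂ, c ≠ 0 ∧ p = c • q i := by
  have hle (j : Fin m) : Module.finrank ℂ (LinearMap.ker
      (Polynomial.aeval (x.restrict (hinv j)) p)) ≤ min (b i) (b j) :=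
    le_min (((hcyc j).finrank_ker_aeval_le hp).trans hpdeg)
      ((Submodule.finrank_le _).trans_eq (hbE j))
  have hsum := (Finset.sum_eq_sum_iff_of_le fun j _ => hle j).mp
    ((Finset.sum_le_sum fun j _ => hle j).antisymm
      (hker.trans (finrank_ker_aeval_le_sum_restrict x E hE hinv p)))
  have htop : LinearMap.ker (Polynomial.aeval (x.restrict (hinv i)) p) = ⊤ :=
    Submodule.eq_top_of_finrank_eq <| by rw [hsum i (Finset.mem_univ i), min_self, hbE]
  have hdvd_p : q i ∣ p := by
    rw [hq]
    exact minpoly.dvd _ _ (LinearMap.ker_eq_top.mp htop)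
  have hassoc : Associated (q i) p :=
    Polynomial.associated_of_dvd_of_natDegree_le hdvd_p hp (hpdeg.trans_eq (hdeg i).symm)
  obtain ⟨v, hv⟩ := hassoc
  obtain ⟨c, hc, hcv⟩ := Polynomial.isUnit_iff.mp v.isUnit
  exact ⟨c, hc.ne_zero, by rw [← hv, ← hcv, mul_comm, Polynomial.smul_eq_C_mul]⟩
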